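/- arXiv:2109.13786 — 7 statements merged into one kernel-verified Lean document; each statement's English description precedes it below -/
import Mathlib

section
/- Let Θ be a nonempty type, α > 0 a real number, T ≥ 1 a natural number, and for each t ∈ {1,…,T} let l_t : Θ → ℝ be a loss function that is α-mixable with a common surrogate (aggregation) map F: for every t, every finite index set, every family of points θ_i ∈ Θ and every family of nonnegative weights P_i summing to 1, one has exp(−α·l_t(F(θ,P))) ≥ Σ_i P_i·exp(−α·l_t(θ_i)). For each t let 𝒩_t be a finite nonempty set of experts with predictions θ_{i,t} ∈ Θ for i ∈ 𝒩_t; let transition weights τ_t(i,j) ≥ 0 satisfy Σ_{j∈𝒩_t} τ_t(i,j) ≤ 1 for every i; let initial unnormalized weights satisfy P̃_{i,1} > 0 for i ∈ 𝒩_1, and for t ≥ 2 define recursively P̃_{j,t} = Σ_{i∈𝒩_{t−1}} P̃_{i,t−1}·exp(−α·l_{t−1}(θ_{i,t−1}))·τ_t(i,j); let P_{i,t} = P̃_{i,t} / Σ_{j∈𝒩_t} P̃_{j,t} (assume the denominators are positive), and let the algorithm's output be θ̂_t = F applied to the family (θ_{i,t}, P_{i,t})_{i∈𝒩_t}. Then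 for every sequence of experts I_t ∈ 𝒩_t (t = 1,…,T) with τ_t(I_{t−1},I_t) > 0 for all 2 ≤ t ≤ T, one has Σ_{t=1}^T l_t(θ̂_t) ≤ Σ_{t=1}^T l_t(θ_{I_t,t}) + (1/α)·( −log P_{I_1,1} − Σ_{t=2}^T log τ_t(I_{t−1},I_t) ). -/
/-!
Follow the logarithm of the normalized weight of the expert `I t` along the path. Mixability says
that weighting by `exp (-α * loss)` and renormalizing raises it by at least `α` times the excess
loss of the mixture over `I t`; a substochastic transition lowers it by at most
`-log τ_t(I_{t-1}, I_t)`. The logarithm starts at `log P_{I_1,1}` and never becomes positive, so the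
gains add up to at most `-log P_{I_1,1}` plus all these drops.
-/

open Finset Real

/-- The share of `i` in the total weight of the experts in `s`. It is `0` when that total
vanishes. -/
noncomputable def normalizedWeight {ι : Type*} (s : Finset ι) (w : ι → ℝ) (i : ι) : ℝ :=
  w i / ∑ j ∈ s, w j

/-- The weights after the losses `L` have been incurred, at learning rate `α` and without
renormalization. -/
noncomputable def lossUpdate {ι : Type*} (α : ℝ) (L w : ι → ℝ) (i : ι) : ℝ :=
  w i * exp (-α * L i)

/-- The weights obtained from the weights `w` of the experts in `s` by one step of the transition
kernel `τ`, where `τ i j` is the fraction of the weight of `i` handed on to `j`. -/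
def propagate {ι : Type*} (s : Finset ι) (w : ι → ℝ) (τ : ι → ι → ℝ) (j : ι) : ℝ :=
  ∑ i ∈ s, w i * τ i j

section OneRound

variable {ι : Type*} {s : Finset ι} {w : ι → ℝ} {i : ι}

theorem normalizedWeight_nonneg (hw : ∀ j ∈ s, 0 ≤ w j) (hi : i ∈ s) :
    0 ≤ normalizedWeight s w i :=
  div_nonneg (hw i hi) (sum_nonneg hw)

theorem normalizedWeight_pos (hw : ∀ j ∈ s, 0 ≤ w j) (hi : i ∈ s) (hwi : 0 < w i) :
    0 < normalizedWeight s w i :=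
  div_pos hwi (sum_pos' hw ⟨i, hi, hwi⟩)

theorem normalizedWeight_le_one (hw : ∀ j ∈ s, 0 ≤ w j) (hi : i ∈ s) :
    normalizedWeight s w i ≤ 1 :=
  div_le_one_of_le₀ (single_le_sum hw hi) (sum_nonneg hw)

theorem sum_normalizedWeight (hw : ∑ j ∈ s, w j ≠ 0) : ∑ j ∈ s, normalizedWeight s w j = 1 := by
  simp only [normalizedWeight, ← sum_div, div_self hw]

theorem lossUpdate_nonneg {α : ℝ} {L : ι → ℝ} (hwi : 0 ≤ w i) : 0 ≤ lossUpdate α L w i :=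
  mul_nonneg hwi (exp_pos _).le

theorem lossUpdate_pos {α : ℝ} {L : ι → ℝ} (hwi : 0 < w i) : 0 < lossUpdate α L w i :=
  mul_pos hwi (exp_pos _)

theorem normalizedWeight_lossUpdate (α : ℝ) (L : ι → ℝ) (hw : ∑ j ∈ s, w j ≠ 0) :
    normalizedWeight s (lossUpdate α L w) i =
      normalizedWeight s w i * exp (-α * L i) /
        ∑ j ∈ s, normalizedWeight s w j * exp (-α * L j) := by
  simp only [normalizedWeight, lossUpdate, div_mul_eq_mul_div, ← sum_div]
  exact (div_div_div_cancel_right₀ hw _ _).symm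

theorem mul_sub_le_log_normalizedWeight_lossUpdate_sub {α c : ℝ} {L : ι → ℝ}
    (hw : ∀ j ∈ s, 0 ≤ w j) (hi : i ∈ s) (hwi : 0 < w i)
    (hmix : ∑ j ∈ s, normalizedWeight s w j * exp (-α * L j) ≤ exp (-α * c)) :
    α * (c - L i) ≤
      log (normalizedWeight s (lossUpdate α L w) i) - log (normalizedWeight s w i) := by
  have hp : 0 < normalizedWeight s w i := normalizedWeight_pos hw hi hwi
  have hsum : 0 < ∑ j ∈ s, normalizedWeight s w j * exp (-α * L j) :=
    sum_pos' (fun j hj ↦ mul_nonneg (normalizedWeight_nonneg hw hj) (exp_pos _).le)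
      ⟨i, hi, mul_pos hp (exp_pos _)⟩
  have hlog : log (∑ j ∈ s, normalizedWeight s w j * exp (-α * L j)) ≤ -α * c :=
    (log_le_iff_le_exp hsum).2 hmix
  rw [normalizedWeight_lossUpdate α L (sum_pos' hw ⟨i, hi, hwi⟩).ne',
    log_div (by positivity) hsum.ne', log_mul hp.ne' (exp_ne_zero _), log_exp]
  linarith

variable {τ : ι → ι → ℝ} {k : ι}

theorem propagate_nonneg (hw : ∀ j ∈ s, 0 ≤ w j) (hτ : ∀ j ∈ s, 0 ≤ τ j k) :
    0 ≤ propagate s w τ k :=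
  sum_nonneg fun j hj ↦ mul_nonneg (hw j hj) (hτ j hj)

theorem mul_le_propagate (hw : ∀ j ∈ s, 0 ≤ w j) (hτ : ∀ j ∈ s, 0 ≤ τ j k) (hi : i ∈ s) :
    w i * τ i k ≤ propagate s w τ k :=
  single_le_sum (f := fun j ↦ w j * τ j k) (fun j hj ↦ mul_nonneg (hw j hj) (hτ j hj)) hi

theorem sum_propagate_le {s' : Finset ι} (hw : ∀ j ∈ s, 0 ≤ w j)
    (hτ : ∀ j ∈ s, ∑ k ∈ s', τ j k ≤ 1) :
    ∑ k ∈ s', propagate s w τ k ≤ ∑ j ∈ s, w j := by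
  simp only [propagate]
  rw [sum_comm]
  refine sum_le_sum fun j hj ↦ ?_
  rw [← mul_sum]
  exact mul_le_of_le_one_right (hw j hj) (hτ j hj)

theorem log_normalizedWeight_add_log_le {s' : Finset ι} (hw : ∀ j ∈ s, 0 ≤ w j)
    (hτ0 : ∀ j ∈ s, ∀ k ∈ s', 0 ≤ τ j k) (hτ1 : ∀ j ∈ s, ∑ k ∈ s', τ j k ≤ 1)
    (hi : i ∈ s) (hk : k ∈ s') (hwi : 0 < w i) (hτik : 0 < τ i k) :
    log (normalizedWeight s w i) + log (τ i k) ≤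
      log (normalizedWeight s' (propagate s w τ) k) := by
  have hp : 0 < normalizedWeight s w i := normalizedWeight_pos hw hi hwi
  have hle : w i * τ i k ≤ propagate s w τ k := mul_le_propagate hw (fun j hj ↦ hτ0 j hj k hk) hi
  have hpos : 0 < propagate s w τ k := (mul_pos hwi hτik).trans_le hle
  have htotal : 0 < ∑ j ∈ s', propagate s w τ j :=
    sum_pos' (fun j hj ↦ propagate_nonneg hw fun i hi ↦ hτ0 i hi j hj) ⟨k, hk, hpos⟩
  rw [← log_mul hp.ne' hτik.ne']
  refine log_le_log (mul_pos hp hτik) ?_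
  calc normalizedWeight s w i * τ i k
      = w i * τ i k / ∑ j ∈ s, w j := div_mul_eq_mul_div _ _ _
    _ ≤ normalizedWeight s' (propagate s w τ) k :=
        div_le_div₀ hpos.le hle htotal (sum_propagate_le hw hτ1)

end OneRound

theorem sum_Icc_le_of_le_sub_of_add_le {G : Type*} [AddCommGroup G] [PartialOrder G]
    [IsOrderedAddMonoid G] {a b d e : ℕ → G} {m n : ℕ} (hmn : m ≤ n)
    (hd : ∀ t ∈ Icc m n, d t ≤ b t - a t) (he : ∀ t ∈ Icc (m + 1) n, b (t - 1) + e t ≤ a t) :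
    ∑ t ∈ Icc m n, d t ≤ b n - a m - ∑ t ∈ Icc (m + 1) n, e t := by
  induction n, hmn using Nat.le_induction with
  | base => simpa using hd m (by simp)
  | succ n hmn ih =>
    have hsum := ih (fun t ht ↦ hd t (Icc_subset_Icc_right n.le_succ ht))
      fun t ht ↦ he t (Icc_subset_Icc_right n.le_succ ht)
    have hd' : d (n + 1) ≤ b (n + 1) - a (n + 1) := hd (n + 1) (mem_Icc.2 ⟨by lia, le_rfl⟩)
    have he' : b n + e (n + 1) ≤ a (n + 1) := he (n + 1) (mem_Icc.2 ⟨by lia, le_rfl⟩)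
    rw [sum_Icc_succ_top (by lia), sum_Icc_succ_top (by lia)]
    calc ∑ t ∈ Icc m n, d t + d (n + 1)
        ≤ (b n - a m - ∑ t ∈ Icc (m + 1) n, e t) + (b (n + 1) - a (n + 1)) := add_le_add hsum hd'
      _ ≤ (b n - a m - ∑ t ∈ Icc (m + 1) n, e t) + (b (n + 1) - (b n + e (n + 1))) := by gcongr
      _ = b (n + 1) - a m - (∑ t ∈ Icc (m + 1) n, e t + e (n + 1)) := by abel

section Recursion

variable {ι : Type*} {α : ℝ} {m T : ℕ} {N : ℕ → Finset ι} {L w : ℕ → ι → ℝ} {τ : ℕ → ι → ι → ℝ}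
  {I : ℕ → ι}

theorem weight_nonneg (hτ : ∀ t ∈ Icc (m + 1) T, ∀ i ∈ N (t - 1), ∀ j ∈ N t, 0 ≤ τ t i j)
    (hinit : ∀ i ∈ N m, 0 ≤ w m i)
    (hrec : ∀ t ∈ Icc (m + 1) T,
      w t = propagate (N (t - 1)) (lossUpdate α (L (t - 1)) (w (t - 1))) (τ t)) :
    ∀ t ∈ Icc m T, ∀ i ∈ N t, 0 ≤ w t i := by
  intro t ht
  obtain ⟨hmt, htT⟩ := mem_Icc.1 ht
  clear ht
  induction t, hmt using Nat.le_induction with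
  | base => exact hinit
  | succ t hmt ih =>
    intro j hj
    have hsucc : t + 1 ∈ Icc (m + 1) T := mem_Icc.2 ⟨by lia, htT⟩
    rw [hrec (t + 1) hsucc]
    exact propagate_nonneg (fun i hi ↦ lossUpdate_nonneg (ih (by lia) i hi))
      fun i hi ↦ hτ (t + 1) hsucc i hi j hj

theorem weight_pos_of_transition_pos
    (hτ : ∀ t ∈ Icc (m + 1) T, ∀ i ∈ N (t - 1), ∀ j ∈ N t, 0 ≤ τ t i j)
    (hinit : ∀ i ∈ N m, 0 ≤ w m i)
    (hrec : ∀ t ∈ Icc (m + 1) T,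
      w t = propagate (N (t - 1)) (lossUpdate α (L (t - 1)) (w (t - 1))) (τ t))
    (hI : ∀ t ∈ Icc m T, I t ∈ N t) (hIinit : 0 < w m (I m))
    (hIτ : ∀ t ∈ Icc (m + 1) T, 0 < τ t (I (t - 1)) (I t)) :
    ∀ t ∈ Icc m T, 0 < w t (I t) := by
  intro t ht
  obtain ⟨hmt, htT⟩ := mem_Icc.1 ht
  clear ht
  induction t, hmt using Nat.le_induction with
  | base => exact hIinit
  | succ t hmt ih =>
    have ht : t ∈ Icc m T := mem_Icc.2 ⟨hmt, by lia⟩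
    have ht' : t + 1 ∈ Icc m T := mem_Icc.2 ⟨by lia, htT⟩
    have hsucc : t + 1 ∈ Icc (m + 1) T := mem_Icc.2 ⟨by lia, htT⟩
    have hupdate : ∀ i ∈ N t, 0 ≤ lossUpdate α (L t) (w t) i := fun i hi ↦
      lossUpdate_nonneg (weight_nonneg hτ hinit hrec t ht i hi)
    rw [hrec (t + 1) hsucc]
    calc 0 < lossUpdate α (L t) (w t) (I t) * τ (t + 1) (I t) (I (t + 1)) :=
          mul_pos (lossUpdate_pos (ih (by lia))) (hIτ (t + 1) hsucc)
      _ ≤ propagate (N t) (lossUpdate α (L t) (w t)) (τ (t + 1)) (I (t + 1)) :=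
          mul_le_propagate hupdate (fun i hi ↦ hτ (t + 1) hsucc i hi _ (hI _ ht')) (hI t ht)

theorem mul_sum_sub_sum_le_neg_log_sub_sum_log {c : ℕ → ℝ} (hmT : m ≤ T)
    (hτ0 : ∀ t ∈ Icc (m + 1) T, ∀ i ∈ N (t - 1), ∀ j ∈ N t, 0 ≤ τ t i j)
    (hτ1 : ∀ t ∈ Icc (m + 1) T, ∀ i ∈ N (t - 1), ∑ j ∈ N t, τ t i j ≤ 1)
    (hinit : ∀ i ∈ N m, 0 ≤ w m i)
    (hrec : ∀ t ∈ Icc (m + 1) T,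
      w t = propagate (N (t - 1)) (lossUpdate α (L (t - 1)) (w (t - 1))) (τ t))
    (hmix : ∀ t ∈ Icc m T,
      ∑ i ∈ N t, normalizedWeight (N t) (w t) i * exp (-α * L t i) ≤ exp (-α * c t))
    (hI : ∀ t ∈ Icc m T, I t ∈ N t) (hIinit : 0 < w m (I m))
    (hIτ : ∀ t ∈ Icc (m + 1) T, 0 < τ t (I (t - 1)) (I t)) :
    α * (∑ t ∈ Icc m T, c t - ∑ t ∈ Icc m T, L t (I t)) ≤
      -log (normalizedWeight (N m) (w m) (I m)) -
        ∑ t ∈ Icc (m + 1) T, log (τ t (I (t - 1)) (I t)) := by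
  let prior (t : ℕ) : ℝ := normalizedWeight (N t) (w t) (I t)
  let posterior (t : ℕ) : ℝ := normalizedWeight (N t) (lossUpdate α (L t) (w t)) (I t)
  have hnonneg := weight_nonneg hτ0 hinit hrec
  have hpos := weight_pos_of_transition_pos hτ0 hinit hrec hI hIinit hIτ
  have hupdate (t) (ht : t ∈ Icc m T) : ∀ i ∈ N t, 0 ≤ lossUpdate α (L t) (w t) i :=
    fun i hi ↦ lossUpdate_nonneg (hnonneg t ht i hi)
  have hgain (t) (ht : t ∈ Icc m T) :
      α * (c t - L t (I t)) ≤ log (posterior t) - log (prior t) :=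
    mul_sub_le_log_normalizedWeight_lossUpdate_sub (hnonneg t ht) (hI t ht) (hpos t ht) (hmix t ht)
  have hdrop (t) (ht : t ∈ Icc (m + 1) T) :
      log (posterior (t - 1)) + log (τ t (I (t - 1)) (I t)) ≤ log (prior t) := by
    obtain ⟨ht', hpred⟩ : t ∈ Icc m T ∧ t - 1 ∈ Icc m T := by grind
    simp only [prior, posterior, hrec t ht]
    exact log_normalizedWeight_add_log_le (hupdate _ hpred) (hτ0 t ht) (hτ1 t ht) (hI _ hpred)
      (hI t ht') (lossUpdate_pos (hpos _ hpred)) (hIτ t ht)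
  have hfinal : log (posterior T) ≤ 0 := by
    have hTT : T ∈ Icc m T := right_mem_Icc.2 hmT
    exact log_nonpos (normalizedWeight_nonneg (hupdate T hTT) (hI T hTT))
      (normalizedWeight_le_one (hupdate T hTT) (hI T hTT))
  calc α * (∑ t ∈ Icc m T, c t - ∑ t ∈ Icc m T, L t (I t))
      = ∑ t ∈ Icc m T, α * (c t - L t (I t)) := by rw [← sum_sub_distrib, mul_sum]
    _ ≤ log (posterior T) - log (prior m) - ∑ t ∈ Icc (m + 1) T, log (τ t (I (t - 1)) (I t)) :=
        sum_Icc_le_of_le_sub_of_add_le hmT hgain hdrop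
    _ ≤ -log (prior m) - ∑ t ∈ Icc (m + 1) T, log (τ t (I (t - 1)) (I t)) := by linarith

end Recursion

/-- Mixture transition loss bound: an online mixture of hyper-experts under
α-mixable losses, with transition weighting, is upper bounded by the loss of
any expert path plus the path's negative log-probability divided by α. -/
theorem mixture_transition_loss_bound
    {Θ : Type*} [Nonempty Θ] {ι : Type*}
    (α : ℝ) (hα : 0 < α) (T : ℕ) (hT : 1 ≤ T)
    (l : ℕ → Θ → ℝ)
    (F : Finset ι → (ι → Θ) → (ι → ℝ) → Θ)
    -- α-mixability of each loss l t with common surrogate F: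
    (hmix : ∀ t ∈ Finset.Icc 1 T, ∀ (s : Finset ι) (θ : ι → Θ) (P : ι → ℝ),
      (∀ i ∈ s, 0 ≤ P i) → (∑ i ∈ s, P i) = 1 →
      ∑ i ∈ s, P i * Real.exp (-α * l t (θ i)) ≤ Real.exp (-α * l t (F s θ P)))
    -- expert sets and their predictions:
    (N : ℕ → Finset ι) (hN : ∀ t ∈ Finset.Icc 1 T, (N t).Nonempty)
    (θ : ι → ℕ → Θ)
    -- transition weights:
    (τ : ℕ → ι → ι → ℝ)
    (hτ0 : ∀ t i j, 0 ≤ τ t i j)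
    (hτ1 : ∀ t ∈ Finset.Icc 2 T, ∀ i, (∑ j ∈ N t, τ t i j) ≤ 1)
    -- unnormalized weights P̃ and their recursion:
    (Ptil : ℕ → ι → ℝ)
    (hPinit : ∀ i ∈ N 1, 0 < Ptil 1 i)
    (hPrec : ∀ t ∈ Finset.Icc 2 T, ∀ j,
      Ptil t j = ∑ i ∈ N (t - 1),
        Ptil (t - 1) i * Real.exp (-α * l (t - 1) (θ i (t - 1))) * τ t i j)
    (hden : ∀ t ∈ Finset.Icc 1 T, 0 < ∑ j ∈ N t, Ptil t j)
    -- normalized weights: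
    (P : ℕ → ι → ℝ)
    (hPdef : ∀ t i, P t i = Ptil t i / ∑ j ∈ N t, Ptil t j)
    -- algorithm outputs:
    (θhat : ℕ → Θ)
    (hθhat : ∀ t ∈ Finset.Icc 1 T, θhat t = F (N t) (fun i => θ i t) (P t))
    -- an arbitrary expert path:
    (I : ℕ → ι)
    (hI : ∀ t ∈ Finset.Icc 1 T, I t ∈ N t)
    (hIτ : ∀ t ∈ Finset.Icc 2 T, 0 < τ t (I (t - 1)) (I t)) :
    ∑ t ∈ Finset.Icc 1 T, l t (θhat t) ≤
      (∑ t ∈ Finset.Icc 1 T, l t (θ (I t) t)) +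
        (1 / α) * (-Real.log (P 1 (I 1)) -
          ∑ t ∈ Finset.Icc 2 T, Real.log (τ t (I (t - 1)) (I t))) := by
  obtain rfl : P = fun t ↦ normalizedWeight (N t) (Ptil t) := funext₂ hPdef
  have hτ0' : ∀ t ∈ Icc 2 T, ∀ i ∈ N (t - 1), ∀ j ∈ N t, 0 ≤ τ t i j :=
    fun t _ i _ j _ ↦ hτ0 t i j
  have hinit : ∀ i ∈ N 1, 0 ≤ Ptil 1 i := fun i hi ↦ (hPinit i hi).le
  have hrec : ∀ t ∈ Icc 2 T, Ptil t = propagate (N (t - 1))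
      (lossUpdate α (fun i ↦ l (t - 1) (θ i (t - 1))) (Ptil (t - 1))) (τ t) :=
    fun t ht ↦ funext (hPrec t ht)
  have hnonneg : ∀ t ∈ Icc 1 T, ∀ i ∈ N t, 0 ≤ Ptil t i :=
    weight_nonneg (L := fun t i ↦ l t (θ i t)) hτ0' hinit hrec
  have hmix' (t) (ht : t ∈ Icc 1 T) : ∑ i ∈ N t, normalizedWeight (N t) (Ptil t) i *
      exp (-α * l t (θ i t)) ≤ exp (-α * l t (θhat t)) := by
    rw [hθhat t ht]
    exact hmix t ht _ _ _ (fun _ ↦ normalizedWeight_nonneg (hnonneg t ht))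
      (sum_normalizedWeight (hden t ht).ne')
  have hregret := mul_sum_sub_sum_le_neg_log_sub_sum_log (L := fun t i ↦ l t (θ i t)) hT hτ0'
    (fun t ht i _ ↦ hτ1 t ht i) hinit hrec hmix' hI (hPinit _ (hI 1 (left_mem_Icc.2 hT))) hIτ
  rwa [← sub_le_iff_le_add', one_div_mul_eq_div, le_div_iff₀' hα]
end

section
/- (Regret decomposition.) Under the same mixture framework as the mixture transition loss bound — α > 0, losses l_t : Θ → ℝ that are α-mixable with a common surrogate F, finite expert sets 𝒩_t with predictions θ_{i,t}, transition weights τ_t(i,j) ≥ 0 with Σ_{j∈𝒩_t} τ_t(i,j) ≤ 1, recursively defined weights P̃_{j,t} = Σ_{i∈𝒩_{t−1}} P̃_{i,t−1}·exp(−α·l_{t−1}(θ_{i,t−1}))·τ_t(i,j) with positive initial weights and positive normalizers, and final predictions θ̂_t = F((θ_{i,t},P_{i,t})_{i∈𝒩_t}) — let 0 = T_0 < T_1 < … < T_S = T be a partition of the horizon into S segments with comparator points θ*_s ∈ Θ for s = 1,…,S, and let I_t ∈ 𝒩_t be any expert sequence with τ_t(I_{t−1},I_t) > 0 for 2 ≤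 t ≤ T. Then the dynamic regret satisfies Σ_{s=1}^{S} Σ_{t=T_{s−1}+1}^{T_s} ( l_t(θ̂_t) − l_t(θ*_s) ) ≤ E + (1/α)·W, where E = Σ_{s=1}^{S} Σ_{t=T_{s−1}+1}^{T_s} ( l_t(θ_{I_t,t}) − l_t(θ*_s) ) is the expert regret and W = −log P_{I_1,1} − Σ_{t=2}^T log τ_t(I_{t−1},I_t) is the mixture regret. -/
/-!
Give a path `I` the weight it would carry if all other paths were discarded. Since weights are
nonnegative, the recursion makes this path weight, which is the initial weight times all
likelihoods `exp (-α * l t (θ (I t) t))` and transitions along `I`, a lower bound for the total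
mass. On the other hand transitions do not create mass, and by mixability the losses at time `t`
shrink the total mass at least by the factor `exp (-α * l t (θhat t))`. Comparing the two bounds
and taking logarithms bounds the cumulative loss of the mixture; the comparator terms cancel.
-/

open Finset

/-- `α`-mixability of the loss `l` with surrogate `F`, for families indexed by finite subsets of a
fixed type `ι`: `F s θ P` is the surrogate prediction for the points `θ i` with weights `P i`,
`i ∈ s`. -/
def IsMixable {Θ ι : Type*} (α : ℝ) (l : Θ → ℝ) (F : Finset ι → (ι → Θ) → (ι → ℝ) → Θ) : Prop :=
  ∀ (s : Finset ι) (θ : ι → Θ) (P : ι → ℝ), (∀ i ∈ s, 0 ≤ P i) → ∑ i ∈ s, P i = 1 →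
    ∑ i ∈ s, P i * Real.exp (-α * l (θ i)) ≤ Real.exp (-α * l (F s θ P))

/-- Unnormalized mixture weights `w` on the time window `[m, n]`, as in the forward recursion of a
hidden Markov model: between times `t` and `t + 1` the weights on the expert set `N t` are
multiplied by the likelihoods `g t` (the exponentiated losses) and moved to `N (t + 1)` by the
transition weights `τ (t + 1)`. -/
structure IsForwardWeights {ι R : Type*} [CommSemiring R] [PartialOrder R] (m n : ℕ)
    (N : ℕ → Finset ι) (τ : ℕ → ι → ι → R) (g w : ℕ → ι → R) : Prop where
  init_nonneg : ∀ i ∈ N m, 0 ≤ w m i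
  likelihood_nonneg : ∀ t i, 0 ≤ g t i
  transition_nonneg : ∀ t i j, 0 ≤ τ t i j
  succ_eq : ∀ t ∈ Ico m n, ∀ j ∈ N (t + 1),
    w (t + 1) j = ∑ i ∈ N t, w t i * g t i * τ (t + 1) i j

namespace IsForwardWeights

variable {ι R : Type*} [CommSemiring R] [PartialOrder R] {m n : ℕ} {N : ℕ → Finset ι}
  {τ : ℕ → ι → ι → R} {g w : ℕ → ι → R}

theorem mono_right {k : ℕ} (hw : IsForwardWeights m n N τ g w) (hkn : k ≤ n) :
    IsForwardWeights m k N τ g w where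
  __ := hw
  succ_eq t ht := hw.succ_eq t (Ico_subset_Ico_right hkn ht)

variable [IsOrderedRing R]

theorem nonneg (hw : IsForwardWeights m n N τ g w) (hmn : m ≤ n) : ∀ i ∈ N n, 0 ≤ w n i := by
  induction n, hmn using Nat.le_induction with
  | base => exact hw.init_nonneg
  | succ n hmn ih =>
    intro j hj
    rw [hw.succ_eq n (by simp [hmn]) j hj]
    exact sum_nonneg fun i hi ↦ mul_nonneg
      (mul_nonneg (ih (hw.mono_right n.le_succ) i hi) (hw.likelihood_nonneg n i))
      (hw.transition_nonneg _ _ _)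

theorem mul_likelihood_nonneg (hw : IsForwardWeights m n N τ g w) (hmn : m ≤ n) :
    ∀ i ∈ N n, 0 ≤ w n i * g n i :=
  fun i hi ↦ mul_nonneg (hw.nonneg hmn i hi) (hw.likelihood_nonneg n i)

theorem mul_likelihood_mul_transition_le (hw : IsForwardWeights m (n + 1) N τ g w) (hmn : m ≤ n)
    {i j : ι} (hi : i ∈ N n) (hj : j ∈ N (n + 1)) :
    w n i * g n i * τ (n + 1) i j ≤ w (n + 1) j := by
  rw [hw.succ_eq n (by simp [hmn]) j hj]
  exact single_le_sum (f := fun i ↦ w n i * g n i * τ (n + 1) i j)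
    (fun i hi ↦ mul_nonneg ((hw.mono_right n.le_succ).mul_likelihood_nonneg hmn i hi)
      (hw.transition_nonneg _ _ _)) hi

theorem mul_prod_path_le (hw : IsForwardWeights m n N τ g w) (hmn : m ≤ n) {I : ℕ → ι}
    (hI : ∀ t ∈ Icc m n, I t ∈ N t) :
    w m (I m) * ∏ t ∈ Ico m n, (g t (I t) * τ (t + 1) (I t) (I (t + 1))) ≤ w n (I n) := by
  induction n, hmn using Nat.le_induction with
  | base => simp
  | succ n hmn ih =>
    have path_le : w m (I m) * ∏ t ∈ Ico m n, (g t (I t) * τ (t + 1) (I t) (I (t + 1))) ≤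
        w n (I n) :=
      ih (hw.mono_right n.le_succ) fun t ht ↦ hI t (Icc_subset_Icc_right n.le_succ ht)
    calc
      _ = w m (I m) * (∏ t ∈ Ico m n, (g t (I t) * τ (t + 1) (I t) (I (t + 1)))) *
          (g n (I n) * τ (n + 1) (I n) (I (n + 1))) := by
        rw [prod_Ico_succ_top hmn, mul_assoc]
      _ ≤ w n (I n) * (g n (I n) * τ (n + 1) (I n) (I (n + 1))) :=
        mul_le_mul_of_nonneg_right path_le
          (mul_nonneg (hw.likelihood_nonneg _ _) (hw.transition_nonneg _ _ _))
      _ = w n (I n) * g n (I n) * τ (n + 1) (I n) (I (n + 1)) := (mul_assoc ..).symm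
      _ ≤ w (n + 1) (I (n + 1)) :=
        hw.mul_likelihood_mul_transition_le hmn (hI n (by simp [hmn]))
          (hI (n + 1) (by grind))

theorem sum_succ_le (hw : IsForwardWeights m (n + 1) N τ g w) (hmn : m ≤ n)
    (hτ : ∀ i ∈ N n, ∑ j ∈ N (n + 1), τ (n + 1) i j ≤ 1) :
    ∑ j ∈ N (n + 1), w (n + 1) j ≤ ∑ i ∈ N n, w n i * g n i :=
  calc
    ∑ j ∈ N (n + 1), w (n + 1) j
      = ∑ j ∈ N (n + 1), ∑ i ∈ N n, w n i * g n i * τ (n + 1) i j :=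
        sum_congr rfl (hw.succ_eq n (by simp [hmn]))
    _ = ∑ i ∈ N n, w n i * g n i * ∑ j ∈ N (n + 1), τ (n + 1) i j := by
        simp only [mul_sum]
        exact sum_comm
    _ ≤ ∑ i ∈ N n, w n i * g n i := sum_le_sum fun i hi ↦
        mul_le_of_le_one_right ((hw.mono_right n.le_succ).mul_likelihood_nonneg hmn i hi) (hτ i hi)

theorem sum_mul_likelihood_le_mul_prod (hw : IsForwardWeights m n N τ g w) (hmn : m ≤ n)
    (hτ : ∀ t ∈ Ico m n, ∀ i ∈ N t, ∑ j ∈ N (t + 1), τ (t + 1) i j ≤ 1) {G : ℕ → R}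
    (hG : ∀ t, 0 ≤ G t)
    (hgG : ∀ t ∈ Icc m n, ∑ i ∈ N t, w t i * g t i ≤ (∑ i ∈ N t, w t i) * G t) :
    ∑ i ∈ N n, w n i * g n i ≤ (∑ i ∈ N m, w m i) * ∏ t ∈ Icc m n, G t := by
  induction n, hmn using Nat.le_induction with
  | base => simpa using hgG m (by simp)
  | succ n hmn ih =>
    calc
      ∑ i ∈ N (n + 1), w (n + 1) i * g (n + 1) i
        ≤ (∑ i ∈ N (n + 1), w (n + 1) i) * G (n + 1) := hgG (n + 1) (by grind)
      _ ≤ (∑ i ∈ N n, w n i * g n i) * G (n + 1) :=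
        mul_le_mul_of_nonneg_right (hw.sum_succ_le hmn (hτ n (by simp [hmn]))) (hG _)
      _ ≤ (∑ i ∈ N m, w m i) * (∏ t ∈ Icc m n, G t) * G (n + 1) :=
        mul_le_mul_of_nonneg_right
          (ih (hw.mono_right n.le_succ) (fun t ht ↦ hτ t (Ico_subset_Ico_right n.le_succ ht))
            fun t ht ↦ hgG t (Icc_subset_Icc_right n.le_succ ht)) (hG _)
      _ = (∑ i ∈ N m, w m i) * ∏ t ∈ Icc m (n + 1), G t := by
        rw [prod_Icc_succ_top (by omega), mul_assoc]

theorem mul_prod_transition_mul_prod_likelihood_le (hw : IsForwardWeights m n N τ g w)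
    (hmn : m ≤ n) (hτ : ∀ t ∈ Ico m n, ∀ i ∈ N t, ∑ j ∈ N (t + 1), τ (t + 1) i j ≤ 1)
    {G : ℕ → R} (hG : ∀ t, 0 ≤ G t)
    (hgG : ∀ t ∈ Icc m n, ∑ i ∈ N t, w t i * g t i ≤ (∑ i ∈ N t, w t i) * G t) {I : ℕ → ι}
    (hI : ∀ t ∈ Icc m n, I t ∈ N t) :
    w m (I m) * (∏ t ∈ Ico m n, τ (t + 1) (I t) (I (t + 1))) * ∏ t ∈ Icc m n, g t (I t) ≤
      (∑ i ∈ N m, w m i) * ∏ t ∈ Icc m n, G t :=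
  calc
    _ = w m (I m) * (∏ t ∈ Ico m n, (g t (I t) * τ (t + 1) (I t) (I (t + 1)))) * g n (I n) := by
      rw [← prod_Ico_mul_eq_prod_Icc hmn, prod_mul_distrib]
      ring
    _ ≤ w n (I n) * g n (I n) :=
      mul_le_mul_of_nonneg_right (hw.mul_prod_path_le hmn hI) (hw.likelihood_nonneg _ _)
    _ ≤ ∑ i ∈ N n, w n i * g n i :=
      single_le_sum (f := fun i ↦ w n i * g n i) (hw.mul_likelihood_nonneg hmn)
        (hI n (by simp [hmn]))
    _ ≤ _ := hw.sum_mul_likelihood_le_mul_prod hmn hτ hG hgG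

end IsForwardWeights

theorem IsMixable.sum_mul_exp_le_sum_mul_exp {Θ ι : Type*} {α : ℝ} {l : Θ → ℝ}
    {F : Finset ι → (ι → Θ) → (ι → ℝ) → Θ} (hl : IsMixable α l F) {s : Finset ι} (θ : ι → Θ)
    {w : ι → ℝ} (hw : ∀ i ∈ s, 0 ≤ w i) (hpos : 0 < ∑ i ∈ s, w i) :
    ∑ i ∈ s, w i * Real.exp (-α * l (θ i)) ≤
      (∑ i ∈ s, w i) * Real.exp (-α * l (F s θ fun i ↦ w i / ∑ j ∈ s, w j)) := by
  have normalized := hl s θ (fun i ↦ w i / ∑ j ∈ s, w j)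
    (fun i hi ↦ div_nonneg (hw i hi) hpos.le) (by rw [← sum_div, div_self hpos.ne'])
  simpa only [div_mul_eq_mul_div, ← sum_div, div_le_iff₀' hpos] using normalized

theorem sum_le_sum_add_of_mul_prod_exp_le {κ : Type*} {s : Finset κ} {a b : κ → ℝ} {α c : ℝ}
    (hα : 0 < α) (hc : 0 < c)
    (h : c * ∏ t ∈ s, Real.exp (-α * a t) ≤ ∏ t ∈ s, Real.exp (-α * b t)) :
    ∑ t ∈ s, b t ≤ ∑ t ∈ s, a t + 1 / α * -Real.log c := by
  simp only [← Real.exp_sum, ← mul_sum] at h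
  have log_le : Real.log c + -α * ∑ t ∈ s, a t ≤ -α * ∑ t ∈ s, b t := by
    simpa [Real.log_mul hc.ne'] using Real.log_le_log (by positivity) h
  rw [one_div_mul_eq_div, ← sub_le_iff_le_add', le_div_iff₀' hα]
  linarith

theorem IsForwardWeights.sum_loss_le {Θ ι : Type*} {α : ℝ} {m n : ℕ} {l : ℕ → Θ → ℝ}
    {F : Finset ι → (ι → Θ) → (ι → ℝ) → Θ} {N : ℕ → Finset ι} {θ : ι → ℕ → Θ}
    {τ : ℕ → ι → ι → ℝ} {w : ℕ → ι → ℝ} {θhat : ℕ → Θ} {I : ℕ → ι}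
    (hw : IsForwardWeights m n N τ (fun t i ↦ Real.exp (-α * l t (θ i t))) w)
    (hα : 0 < α) (hmn : m ≤ n) (hl : ∀ t ∈ Icc m n, IsMixable α (l t) F)
    (hτ : ∀ t ∈ Ico m n, ∀ i ∈ N t, ∑ j ∈ N (t + 1), τ (t + 1) i j ≤ 1)
    (hsum : ∀ t ∈ Icc m n, 0 < ∑ i ∈ N t, w t i)
    (hθhat : ∀ t ∈ Icc m n, θhat t = F (N t) (θ · t) fun i ↦ w t i / ∑ j ∈ N t, w t j)
    (hI : ∀ t ∈ Icc m n, I t ∈ N t) (hIw : 0 < w m (I m))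
    (hIτ : ∀ t ∈ Ico m n, 0 < τ (t + 1) (I t) (I (t + 1))) :
    ∑ t ∈ Icc m n, l t (θhat t) ≤ ∑ t ∈ Icc m n, l t (θ (I t) t) +
      1 / α * (-Real.log (w m (I m) / ∑ i ∈ N m, w m i) -
        ∑ t ∈ Ico m n, Real.log (τ (t + 1) (I t) (I (t + 1)))) := by
  have hsum_m : 0 < ∑ i ∈ N m, w m i := hsum m (by simp [hmn])
  have mass_decay : ∀ t ∈ Icc m n, ∑ i ∈ N t, w t i * Real.exp (-α * l t (θ i t)) ≤
      (∑ i ∈ N t, w t i) * Real.exp (-α * l t (θhat t)) := fun t ht ↦ by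
    obtain ⟨hmt, htn⟩ := mem_Icc.mp ht
    rw [hθhat t ht]
    exact (hl t ht).sum_mul_exp_le_sum_mul_exp (θ · t) ((hw.mono_right htn).nonneg hmt) (hsum t ht)
  have path_le := hw.mul_prod_transition_mul_prod_likelihood_le hmn hτ
    (fun t ↦ (Real.exp_pos (-α * l t (θhat t))).le) mass_decay hI
  have hτ_prod : 0 < ∏ t ∈ Ico m n, τ (t + 1) (I t) (I (t + 1)) := prod_pos hIτ
  have log_path : Real.log (w m (I m) / (∑ i ∈ N m, w m i) *
      ∏ t ∈ Ico m n, τ (t + 1) (I t) (I (t + 1))) =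
      Real.log (w m (I m) / ∑ i ∈ N m, w m i) +
        ∑ t ∈ Ico m n, Real.log (τ (t + 1) (I t) (I (t + 1))) := by
    rw [Real.log_mul (div_pos hIw hsum_m).ne' hτ_prod.ne',
      Real.log_prod fun t ht ↦ (hIτ t ht).ne']
  rw [← neg_add', ← log_path]
  refine sum_le_sum_add_of_mul_prod_exp_le hα (by positivity) ?_
  rwa [div_mul_eq_mul_div, div_mul_eq_mul_div, div_le_iff₀' hsum_m]

theorem sum_Icc_sum_Icc_consecutive {M : Type*} [AddCommMonoid M] (f : ℕ → M) {b : ℕ → ℕ} {S : ℕ}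
    (hb : ∀ s < S, b s ≤ b (s + 1)) :
    ∑ s ∈ Icc 1 S, ∑ t ∈ Icc (b (s - 1) + 1) (b s), f t = ∑ t ∈ Icc (b 0 + 1) (b S), f t := by
  induction S with
  | zero => simp
  | succ S ih =>
    have hb0 : b 0 ≤ b S := monotoneOn_of_le_succ Set.ordConnected_Iic
      (fun s _ _ hs ↦ hb s (Nat.lt_succ_of_lt hs)) S.zero_le Set.self_mem_Iic S.zero_le
    rw [sum_Icc_succ_top (by omega), ih fun s hs ↦ hb s (by omega), Nat.add_sub_cancel]
    simp only [Icc_add_one_left_eq_Ioc]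
    exact sum_Ioc_consecutive f hb0 (hb S S.lt_succ_self)

/-- Regret decomposition: under the mixture framework with α-mixable losses,
the dynamic regret against a comparator that is constant on each of S segments
decomposes into the expert regret E plus (1/α) times the mixture regret W. -/
theorem regret_decomposition
    {Θ : Type*} [Nonempty Θ] {ι : Type*}
    (α : ℝ) (hα : 0 < α) (T : ℕ) (hT : 1 ≤ T)
    (l : ℕ → Θ → ℝ)
    (F : Finset ι → (ι → Θ) → (ι → ℝ) → Θ)
    -- α-mixability of each loss l t with common surrogate F:
    (hmix : ∀ t ∈ Finset.Icc 1 T, ∀ (s : Finset ι) (θ : ι → Θ) (P : ι → ℝ),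
      (∀ i ∈ s, 0 ≤ P i) → (∑ i ∈ s, P i) = 1 →
      ∑ i ∈ s, P i * Real.exp (-α * l t (θ i)) ≤ Real.exp (-α * l t (F s θ P)))
    -- expert sets and their predictions:
    (N : ℕ → Finset ι) (hN : ∀ t ∈ Finset.Icc 1 T, (N t).Nonempty)
    (θ : ι → ℕ → Θ)
    -- transition weights:
    (τ : ℕ → ι → ι → ℝ)
    (hτ0 : ∀ t i j, 0 ≤ τ t i j)
    (hτ1 : ∀ t ∈ Finset.Icc 2 T, ∀ i, (∑ j ∈ N t, τ t i j) ≤ 1)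
    -- unnormalized weights P̃ and their recursion:
    (Ptil : ℕ → ι → ℝ)
    (hPinit : ∀ i ∈ N 1, 0 < Ptil 1 i)
    (hPrec : ∀ t ∈ Finset.Icc 2 T, ∀ j,
      Ptil t j = ∑ i ∈ N (t - 1),
        Ptil (t - 1) i * Real.exp (-α * l (t - 1) (θ i (t - 1))) * τ t i j)
    (hden : ∀ t ∈ Finset.Icc 1 T, 0 < ∑ j ∈ N t, Ptil t j)
    -- normalized weights:
    (P : ℕ → ι → ℝ)
    (hPdef : ∀ t i, P t i = Ptil t i / ∑ j ∈ N t, Ptil t j)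
    -- algorithm outputs:
    (θhat : ℕ → Θ)
    (hθhat : ∀ t ∈ Finset.Icc 1 T, θhat t = F (N t) (fun i => θ i t) (P t))
    -- segmentation 0 = T_0 < T_1 < ... < T_S = T with comparators θ*_s:
    (S : ℕ) (hS : 1 ≤ S)
    (Tb : ℕ → ℕ) (hTb0 : Tb 0 = 0) (hTbS : Tb S = T)
    (hTbmono : ∀ s < S, Tb s < Tb (s + 1))
    (θstar : ℕ → Θ)
    -- an arbitrary expert path:
    (I : ℕ → ι)
    (hI : ∀ t ∈ Finset.Icc 1 T, I t ∈ N t)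
    (hIτ : ∀ t ∈ Finset.Icc 2 T, 0 < τ t (I (t - 1)) (I t)) :
    ∑ s ∈ Finset.Icc 1 S, ∑ t ∈ Finset.Icc (Tb (s - 1) + 1) (Tb s),
        (l t (θhat t) - l t (θstar s)) ≤
      (∑ s ∈ Finset.Icc 1 S, ∑ t ∈ Finset.Icc (Tb (s - 1) + 1) (Tb s),
          (l t (θ (I t) t) - l t (θstar s))) +
        (1 / α) * (-Real.log (P 1 (I 1)) -
          ∑ t ∈ Finset.Icc 2 T, Real.log (τ t (I (t - 1)) (I t))) := by
  have add_one_mem {t : ℕ} (ht : t ∈ Ico 1 T) : t + 1 ∈ Icc 2 T := by grind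
  have hw : IsForwardWeights 1 T N τ (fun t i ↦ Real.exp (-α * l t (θ i t))) Ptil :=
    ⟨fun i hi ↦ (hPinit i hi).le, fun _ _ ↦ (Real.exp_pos _).le, hτ0,
      fun t ht j _ ↦ hPrec (t + 1) (add_one_mem ht) j⟩
  have loss_le : ∑ t ∈ Icc 1 T, l t (θhat t) ≤ ∑ t ∈ Icc 1 T, l t (θ (I t) t) +
      1 / α * (-Real.log (P 1 (I 1)) - ∑ t ∈ Icc 2 T, Real.log (τ t (I (t - 1)) (I t))) := by
    have shift : ∑ t ∈ Icc 2 T, Real.log (τ t (I (t - 1)) (I t)) =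
        ∑ t ∈ Ico 1 T, Real.log (τ (t + 1) (I t) (I (t + 1))) :=
      (sum_Ico_add' (fun t ↦ Real.log (τ t (I (t - 1)) (I t))) 1 T 1).symm
    rw [shift, hPdef]
    exact hw.sum_loss_le hα hT hmix (fun t ht i _ ↦ hτ1 (t + 1) (add_one_mem ht) i) hden
      (fun t ht ↦ by rw [hθhat t ht, funext (hPdef t)]) hI (hPinit _ (hI 1 (by simp [hT])))
      fun t ht ↦ hIτ (t + 1) (add_one_mem ht)
  have segments (f : ℕ → ℝ) :
      ∑ s ∈ Icc 1 S, ∑ t ∈ Icc (Tb (s - 1) + 1) (Tb s), f t = ∑ t ∈ Icc 1 T, f t := by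
    rw [sum_Icc_sum_Icc_consecutive f fun s hs ↦ (hTbmono s hs).le, hTb0, hTbS]
  simp only [sum_sub_distrib, segments]
  linarith
end

section
/- (1/2-mixability of the square loss with Vovk's substitution function.) Let n ≥ 1, let P_1,…,P_n be nonnegative reals with Σ_{i=1}^n P_i = 1, let θ_1,…,θ_n ∈ [−1,1], and define the aggregated prediction θ̂ = (1/2)·( log( Σ_{i=1}^n P_i·exp(−(θ_i − 1)²/2) ) − log( Σ_{i=1}^n P_i·exp(−(θ_i + 1)²/2) ) ). Then for every x ∈ [−1,1], exp(−(θ̂ − x)²/2) ≥ Σ_{i=1}^n P_i·exp(−(θ_i − x)²/2). -/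
/-!
Write `m` for the aggregated prediction. For fixed `θ` the exponent `((m - x)² - (θ - x)²) / 2` is
affine in `x`, so its exponential, and every mixture of such exponentials over `θ`, is convex in
`x`; on `[-1, 1]` it is bounded by its larger endpoint value. The substitution function is the
choice of `m` that makes the mixture take the same value at `x = 1` and `x = -1`. This common value
is at most `1`, because for an outcome `±1` of mean `m` each `θ` contributes at most `1`: that is
the inequality `cosh d + m sinh d ≤ exp (m d + d² / 2)` with `d = θ - m`, which is Hoeffding's lemma
for `|m| ≤ 1` and Bernoulli's inequality for `|m| ≥ 1`.
-/

open MeasureTheory ProbabilityTheory Real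
open scoped unitInterval

section CoshSinh

variable {t : ℝ}

lemma cosh_add_mul_sinh_eq (t d : ℝ) :
    cosh d + t * sinh d = (1 + t) / 2 * exp d + (1 - t) / 2 * exp (-d) := by
  rw [cosh_eq, sinh_eq]
  ring

lemma cosh_add_mul_sinh_le_exp_of_mem_Icc (ht : t ∈ Set.Icc (-1 : ℝ) 1) (d : ℝ) :
    cosh d + t * sinh d ≤ exp (t * d + d ^ 2 / 2) := by
  let p : I := ⟨(1 + t) / 2, by linarith [ht.1], by linarith [ht.2]⟩
  let μ : Measure ℝ := bernoulliMeasure 1 (-1) p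
  have integral_μ (f : ℝ → ℝ) : ∫ y, f y ∂μ = (1 + t) / 2 * f 1 + (1 - t) / 2 * f (-1) := by
    rw [integral_bernoulliMeasure]
    simp only [p, smul_eq_mul]
    ring
  have mean_μ : ∫ y, id y ∂μ = t := by
    rw [integral_μ]
    simp only [id]
    ring
  have mem_Icc : ∀ᵐ y ∂μ, id y ∈ Set.Icc (-1 : ℝ) 1 := by
    simp [μ, bernoulliMeasure_def, ae_add_measure_iff, Measure.ae_smul_measure]
  have hoeffding := (hasSubgaussianMGF_of_mem_Icc aemeasurable_id mem_Icc).mgf_le d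
  rw [mgf, mean_μ, integral_μ] at hoeffding
  calc
    cosh d + t * sinh d
        = exp (t * d) * ((1 + t) / 2 * exp (d * (1 - t)) + (1 - t) / 2 * exp (d * (-1 - t))) := by
      rw [cosh_add_mul_sinh_eq, mul_add, mul_left_comm, ← exp_add, mul_left_comm, ← exp_add]
      ring_nf
    _ ≤ exp (t * d) * exp (d ^ 2 / 2) := by
      gcongr
      refine hoeffding.trans_eq ?_
      norm_num
    _ = exp (t * d + d ^ 2 / 2) := (exp_add _ _).symm

lemma cosh_add_mul_sinh_le_exp_of_one_le (ht : 1 ≤ t) (d : ℝ) :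
    cosh d + t * sinh d ≤ exp (t * d) := by
  have bernoulli : 1 + (1 + t) / 2 * (exp (2 * d) - 1) ≤ exp ((1 + t) * d) := by
    have h := one_add_mul_self_le_rpow_one_add (s := exp (2 * d) - 1) (p := (1 + t) / 2)
      (by linarith [exp_pos (2 * d)]) (by linarith)
    rwa [add_sub_cancel, ← exp_mul, show 2 * d * ((1 + t) / 2) = (1 + t) * d by ring] at h
  calc
    cosh d + t * sinh d = exp (-d) * (1 + (1 + t) / 2 * (exp (2 * d) - 1)) := by
      have h : exp d = exp (-d) * exp (2 * d) := by rw [← exp_add]; congr 1; ring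
      rw [cosh_add_mul_sinh_eq, h]
      ring
    _ ≤ exp (-d) * exp ((1 + t) * d) := by gcongr
    _ = exp (t * d) := by rw [← exp_add]; congr 1; ring

lemma cosh_add_mul_sinh_le_exp_of_one_le_abs (ht : 1 ≤ |t|) (d : ℝ) :
    cosh d + t * sinh d ≤ exp (t * d) := by
  rcases le_abs.mp ht with h | h
  · exact cosh_add_mul_sinh_le_exp_of_one_le h d
  · simpa using cosh_add_mul_sinh_le_exp_of_one_le h (-d)

lemma cosh_add_mul_sinh_le_exp (t d : ℝ) :
    cosh d + t * sinh d ≤ exp (t * d + d ^ 2 / 2) := by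
  rcases le_total |t| 1 with h | h
  · exact cosh_add_mul_sinh_le_exp_of_mem_Icc (abs_le.mp h) d
  · refine (cosh_add_mul_sinh_le_exp_of_one_le_abs h d).trans (exp_le_exp.mpr ?_)
    linarith [sq_nonneg d]

end CoshSinh

/-- The exponentiated regret, at learning rate `1/2`, of predicting `m` instead of `θ` when the
outcome is `x`, under the square loss. -/
noncomputable def expRegret (m θ x : ℝ) : ℝ :=
  exp (((m - x) ^ 2 - (θ - x) ^ 2) / 2)

lemma convexOn_expRegret (m θ : ℝ) : ConvexOn ℝ Set.univ (expRegret m θ) := by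
  have h := convexOn_exp.comp_affineMap
    (AffineMap.lineMap ((m ^ 2 - θ ^ 2) / 2) ((m ^ 2 - θ ^ 2) / 2 + (θ - m)))
  rw [Set.preimage_univ] at h
  refine h.congr fun x _ ↦ ?_
  simp only [Function.comp_apply, AffineMap.lineMap_apply, vsub_eq_sub, vadd_eq_add, smul_eq_mul,
    expRegret]
  ring_nf

lemma expRegret_average_le_one (m θ : ℝ) :
    (1 + m) / 2 * expRegret m θ 1 + (1 - m) / 2 * expRegret m θ (-1) ≤ 1 := by
  obtain ⟨d, rfl⟩ : ∃ d, θ = m + d := ⟨θ - m, by ring⟩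
  have h_one : expRegret m (m + d) 1 = exp (-(m * d + d ^ 2 / 2)) * exp d := by
    rw [expRegret, ← exp_add]; ring_nf
  have h_neg_one : expRegret m (m + d) (-1) = exp (-(m * d + d ^ 2 / 2)) * exp (-d) := by
    rw [expRegret, ← exp_add]; ring_nf
  calc
    _ = exp (-(m * d + d ^ 2 / 2)) * (cosh d + m * sinh d) := by
      rw [h_one, h_neg_one, cosh_add_mul_sinh_eq]
      ring
    _ ≤ exp (-(m * d + d ^ 2 / 2)) * exp (m * d + d ^ 2 / 2) := by
      gcongr
      exact cosh_add_mul_sinh_le_exp m d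
    _ = 1 := by rw [← exp_add, neg_add_cancel, exp_zero]

section Mixture

variable {ι : Type*} [Fintype ι] {P : ι → ℝ}

/-- The mixture, with weights `P`, of the exponentiated losses at learning rate `1/2` of the
predictions `θ i` when the outcome is `x`. -/
noncomputable def expLossMixture (P θ : ι → ℝ) (x : ℝ) : ℝ :=
  ∑ i, P i * exp (-(θ i - x) ^ 2 / 2)

/-- Vovk's substitution function for the square loss on `[-1, 1]` at learning rate `1/2`. -/
noncomputable def vovkPrediction (P θ : ι → ℝ) : ℝ :=
  1 / 2 * (log (expLossMixture P θ 1) - log (expLossMixture P θ (-1)))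

lemma expLossMixture_pos (hP : ∀ i, 0 ≤ P i) (hP₀ : ∃ i, 0 < P i) (θ : ι → ℝ) (x : ℝ) :
    0 < expLossMixture P θ x := by
  obtain ⟨i, hi⟩ := hP₀
  exact Finset.sum_pos' (fun j _ ↦ mul_nonneg (hP j) (exp_nonneg _))
    ⟨i, Finset.mem_univ i, mul_pos hi (exp_pos _)⟩

lemma sum_mul_expRegret (P θ : ι → ℝ) (m x : ℝ) :
    ∑ i, P i * expRegret m (θ i) x = exp ((m - x) ^ 2 / 2) * expLossMixture P θ x := by
  rw [expLossMixture, Finset.mul_sum]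
  refine Finset.sum_congr rfl fun i _ ↦ ?_
  rw [mul_left_comm, ← exp_add, expRegret]
  ring_nf

lemma convexOn_sum_mul_expRegret (hP : ∀ i, 0 ≤ P i) (θ : ι → ℝ) (m : ℝ) :
    ConvexOn ℝ Set.univ fun x ↦ ∑ i, P i * expRegret m (θ i) x := by
  have h := Finset.sum_induction (s := Finset.univ) (fun i ↦ P i • expRegret m (θ i))
    (ConvexOn ℝ Set.univ) (fun _ _ ↦ ConvexOn.add) (convexOn_const 0 convex_univ)
    fun i _ ↦ (convexOn_expRegret m (θ i)).smul (hP i)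
  rwa [Finset.sum_fn] at h

lemma sum_mul_expRegret_average_le (hP : ∀ i, 0 ≤ P i) (θ : ι → ℝ) (m : ℝ) :
    (1 + m) / 2 * ∑ i, P i * expRegret m (θ i) 1
      + (1 - m) / 2 * ∑ i, P i * expRegret m (θ i) (-1) ≤ ∑ i, P i := by
  rw [Finset.mul_sum, Finset.mul_sum, ← Finset.sum_add_distrib]
  refine Finset.sum_le_sum fun i _ ↦ ?_
  linarith [mul_le_mul_of_nonneg_left (expRegret_average_le_one m (θ i)) (hP i)]

lemma sum_mul_expRegret_vovkPrediction_neg_one (hP : ∀ i, 0 ≤ P i) (hP₀ : ∃ i, 0 < P i)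
    (θ : ι → ℝ) :
    ∑ i, P i * expRegret (vovkPrediction P θ) (θ i) (-1)
      = ∑ i, P i * expRegret (vovkPrediction P θ) (θ i) 1 := by
  rw [sum_mul_expRegret, sum_mul_expRegret, ← exp_log (expLossMixture_pos hP hP₀ θ (-1)),
    ← exp_log (expLossMixture_pos hP hP₀ θ 1), ← exp_add, ← exp_add]
  have h : log (expLossMixture P θ 1) - log (expLossMixture P θ (-1)) = 2 * vovkPrediction P θ := by
    rw [vovkPrediction]; ring
  congr 1
  linear_combination -h

theorem square_loss_half_mixable_general (hP : ∀ i, 0 ≤ P i) (hPsum : ∑ i, P i = 1)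
    (θ : ι → ℝ) {x : ℝ} (hx : x ∈ Set.Icc (-1 : ℝ) 1) :
    expLossMixture P θ x ≤ exp (-(vovkPrediction P θ - x) ^ 2 / 2) := by
  set m := vovkPrediction P θ
  have hP₀ : ∃ i, 0 < P i := by
    by_contra! h
    linarith [Finset.sum_nonpos fun i (_ : i ∈ Finset.univ) ↦ h i]
  have endpoints_eq := sum_mul_expRegret_vovkPrediction_neg_one hP hP₀ θ
  have endpoint_le_one : ∑ i, P i * expRegret m (θ i) 1 ≤ 1 := by
    have h := sum_mul_expRegret_average_le hP θ m
    rw [endpoints_eq] at h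
    linarith
  have mixture_le_one : ∑ i, P i * expRegret m (θ i) x ≤ 1 :=
    ((convexOn_sum_mul_expRegret hP θ m).le_max_of_mem_Icc trivial trivial hx).trans
      (max_le (endpoints_eq.trans_le endpoint_le_one) endpoint_le_one)
  rwa [sum_mul_expRegret, ← le_div_iff₀' (exp_pos _), one_div, ← exp_neg, ← neg_div]
    at mixture_le_one

end Mixture

/-- 1/2-mixability of the square loss on [-1,1] with Vovk's substitution
function as surrogate. -/
theorem square_loss_half_mixable
    (n : ℕ) (hn : 1 ≤ n)
    (P : Fin n → ℝ) (hP : ∀ i, 0 ≤ P i) (hPsum : ∑ i, P i = 1)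
    (θ : Fin n → ℝ) (hθ : ∀ i, θ i ∈ Set.Icc (-1 : ℝ) 1)
    (θhat : ℝ)
    (hθhat : θhat = (1 / 2) *
      (Real.log (∑ i, P i * Real.exp (-(θ i - 1) ^ 2 / 2)) -
        Real.log (∑ i, P i * Real.exp (-(θ i + 1) ^ 2 / 2))))
    (x : ℝ) (hx : x ∈ Set.Icc (-1 : ℝ) 1) :
    ∑ i, P i * Real.exp (-(θ i - x) ^ 2 / 2) ≤ Real.exp (-(θhat - x) ^ 2 / 2) := by
  simpa only [hθhat, vovkPrediction, expLossMixture, sub_neg_eq_add]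
    using square_loss_half_mixable_general hP hPsum θ hx
end

section
/- (Complexity bound for the generic hyper-expert scheme.) Let α : ℕ → ℕ with α_n ≥ 1 and β : ℕ → ℕ, and define f : ℕ → ℕ by f_1 = 1 and f_n = α_n·f_{n−1} + β_n for n ≥ 2, where β_n ≤ f_{n−1} for all n ≥ 2; assume f is strictly increasing. Fix a natural number T with f_1 ≤ T and let n_T = max{ n ≥ 1 : f_n ≤ T } (assume f is unbounded so this maximum exists). Then the number of hyper-experts started by time T, namely the cardinality of the set { (n,k) : n ≥ 2, 1 ≤ k ≤ α_n, β_n + k·f_{n−1} ≤ T } , is at most Σ_{n=2}^{n_T+1} α_n, and hence at most n_T · max_{2 ≤ n ≤ n_T+1} α_n. -/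
/-!
A hyper-expert of period `f n` starts no earlier than time `f (n - 1)`, so if it has started by time
`T` then `f (n - 1) ≤ T`, that is `n - 1 ≤ n_T`. Only the levels `n = 2, …, n_T + 1` can therefore
contribute, and level `n` contributes at most `α n` experts.
-/

theorem ncard_le_sum_card_of_forall_mem {ι κ : Type*} {S : Set (ι × κ)} {s : Finset ι}
    {t : ι → Finset κ} (hS : ∀ p ∈ S, p.1 ∈ s ∧ p.2 ∈ t p.1) :
    S.ncard ≤ ∑ i ∈ s, (t i).card := by
  let U : Finset (ι × κ) := (s.sigma t).map (Equiv.sigmaEquivProd ι κ).toEmbedding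
  have hSU : S ⊆ U := fun p hp ↦
    Finset.mem_map.2 ⟨⟨p.1, p.2⟩, Finset.mem_sigma.2 (hS p hp), rfl⟩
  calc S.ncard ≤ (U : Set (ι × κ)).ncard := Set.ncard_le_ncard hSU
    _ = ∑ i ∈ s, (t i).card := by rw [Set.ncard_coe_finset, Finset.card_map, Finset.card_sigma]

theorem sum_le_card_mul_sup {ι : Type*} (s : Finset ι) (g : ι → ℕ) :
    ∑ i ∈ s, g i ≤ s.card * s.sup g :=
  Finset.sum_le_card_nsmul s g _ fun _ hi ↦ Finset.le_sup hi

section HyperExperts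

variable {M : Type*} [AddMonoid M] [Preorder M]

/-- The hyper-experts started by time `T`, the `k`-th expert of level `n` (counted from `k = 1`)
being encoded as the pair `(n, k)`. Times are taken in an ordered monoid `M`, so that the start
time `β n + k * f (n - 1)` is written with the action of `ℕ` on `M`. -/
def startedHyperExperts (α : ℕ → ℕ) (β f : ℕ → M) (T : M) : Set (ℕ × ℕ) :=
  {p | 2 ≤ p.1 ∧ 1 ≤ p.2 ∧ p.2 ≤ α p.1 ∧ β p.1 + p.2 • f (p.1 - 1) ≤ T}

variable [CanonicallyOrderedAdd M] {α : ℕ → ℕ} {β f : ℕ → M} {T : M} {N : ℕ}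

theorem period_pred_le_of_mem_startedHyperExperts {p : ℕ × ℕ}
    (hp : p ∈ startedHyperExperts α β f T) : f (p.1 - 1) ≤ T := by
  obtain ⟨-, hk, -, hstart⟩ := hp
  calc f (p.1 - 1) ≤ (p.2 - 1) • f (p.1 - 1) + f (p.1 - 1) := le_add_self
    _ = p.2 • f (p.1 - 1) := by rw [← succ_nsmul, Nat.sub_add_cancel hk]
    _ ≤ β p.1 + p.2 • f (p.1 - 1) := le_add_self
    _ ≤ T := hstart

theorem fst_mem_Icc_of_mem_startedHyperExperts (hN : ∀ n, 1 ≤ n → f n ≤ T → n ≤ N) {p : ℕ × ℕ}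
    (hp : p ∈ startedHyperExperts α β f T) : p.1 ∈ Finset.Icc 2 (N + 1) := by
  have hlevel : 2 ≤ p.1 := hp.1
  have hpred : p.1 - 1 ≤ N :=
    hN _ (Nat.le_sub_one_of_lt hlevel) (period_pred_le_of_mem_startedHyperExperts hp)
  exact Finset.mem_Icc.2 ⟨hlevel, Nat.sub_le_iff_le_add.1 hpred⟩

theorem ncard_startedHyperExperts_le_sum (hN : ∀ n, 1 ≤ n → f n ≤ T → n ≤ N) :
    (startedHyperExperts α β f T).ncard ≤ ∑ n ∈ Finset.Icc 2 (N + 1), α n := by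
  have hmem : ∀ p ∈ startedHyperExperts α β f T,
      p.1 ∈ Finset.Icc 2 (N + 1) ∧ p.2 ∈ Finset.Icc 1 (α p.1) := fun _ hp ↦
    ⟨fst_mem_Icc_of_mem_startedHyperExperts hN hp, Finset.mem_Icc.2 ⟨hp.2.1, hp.2.2.1⟩⟩
  calc (startedHyperExperts α β f T).ncard
      ≤ ∑ n ∈ Finset.Icc 2 (N + 1), (Finset.Icc 1 (α n)).card :=
        ncard_le_sum_card_of_forall_mem (t := fun n ↦ Finset.Icc 1 (α n)) hmem
    _ = ∑ n ∈ Finset.Icc 2 (N + 1), α n := by simp only [Nat.card_Icc, Nat.add_sub_cancel]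

theorem hyper_expert_complexity_bound_general (hN : ∀ n, 1 ≤ n → f n ≤ T → n ≤ N) :
    (startedHyperExperts α β f T).ncard ≤ ∑ n ∈ Finset.Icc 2 (N + 1), α n ∧
      (startedHyperExperts α β f T).ncard ≤ N * (Finset.Icc 2 (N + 1)).sup α := by
  have hsum := ncard_startedHyperExperts_le_sum (α := α) (β := β) hN
  refine ⟨hsum, hsum.trans ?_⟩
  simpa only [Nat.card_Icc, Nat.reduceSubDiff] using sum_le_card_mul_sup (Finset.Icc 2 (N + 1)) α

end HyperExperts

/-- Complexity bound for the generic hyper-expert scheme: the number of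
hyper-experts started by the time horizon T is at most Σ_{n=2}^{n_T+1} α_n,
and hence at most n_T · max_{2 ≤ n ≤ n_T+1} α_n. -/
theorem hyper_expert_complexity_bound
    (α β : ℕ → ℕ) (hα : ∀ n, 1 ≤ α n)
    (f : ℕ → ℕ) (hf1 : f 1 = 1)
    (hfrec : ∀ n, 2 ≤ n → f n = α n * f (n - 1) + β n)
    (hβ : ∀ n, 2 ≤ n → β n ≤ f (n - 1))
    (hfmono : ∀ m n, 1 ≤ m → m < n → f m < f n)
    (hfunbdd : ∀ M : ℕ, ∃ n, 1 ≤ n ∧ M < f n)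
    (T : ℕ) (hT : f 1 ≤ T)
    (nT : ℕ) (hnT1 : 1 ≤ nT) (hnTle : f nT ≤ T)
    (hnTmax : ∀ n, 1 ≤ n → f n ≤ T → n ≤ nT) :
    Set.ncard {p : ℕ × ℕ |
        2 ≤ p.1 ∧ 1 ≤ p.2 ∧ p.2 ≤ α p.1 ∧ β p.1 + p.2 * f (p.1 - 1) ≤ T}
      ≤ ∑ n ∈ Finset.Icc 2 (nT + 1), α n ∧
    Set.ncard {p : ℕ × ℕ |
        2 ≤ p.1 ∧ 1 ≤ p.2 ∧ p.2 ≤ α p.1 ∧ β p.1 + p.2 * f (p.1 - 1) ≤ T}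
      ≤ nT * (Finset.Icc 2 (nT + 1)).sup α :=
  hyper_expert_complexity_bound_general hnTmax
end

section
/- Let a > 0, b > 0, c > 1 be real numbers. Then there exists a natural number N ≥ 3 such that for all natural numbers n ≥ N, exp( a·( exp(b·(log n)^c) − exp(b·(log(n−1))^c) ) ) ≤ ( exp( a·exp(b·(log n)^c) ) )^{ b·c·(log n)^{c−1} / n }. -/
/-!
Up to the factor `a`, the logarithm of the period is `exp ∘ φ ∘ log` with `φ t = b * t ^ c`. The
tangent of the convex function `φ` at `log x` has slope `m = b * c * log x ^ (c - 1)`, so that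
`exp (φ (log y)) ≥ exp (φ (log x)) * (y / x) ^ m`. As soon as `m ≥ 1`, Bernoulli's inequality
`(y / x) ^ m ≥ 1 + m * (y / x - 1)` linearizes this, and for `y = x - 1` the bound falls short of
`exp (φ (log x))` by exactly the proportion `m / x`. Since `c > 1`, eventually `m ≥ 1`.
-/

open Filter

lemma eventually_one_le_mul_log_rpow {k p : ℝ} (hk : 0 < k) (hp : 0 < p) :
    ∀ᶠ x : ℝ in atTop, 1 ≤ k * Real.log x ^ p :=
  (((tendsto_rpow_atTop hp).comp Real.tendsto_log_atTop).const_mul_atTop hk).eventually_ge_atTop 1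

lemma rpow_add_mul_rpow_sub_one_mul_sub_le_rpow {p x y : ℝ} (hp : 1 ≤ p) (hx : 0 < x)
    (hy : 0 ≤ y) : x ^ p + p * x ^ (p - 1) * (y - x) ≤ y ^ p := by
  have bernoulli : 1 + p * (y / x - 1) ≤ (y / x) ^ p := by
    simpa only [add_sub_cancel] using
      one_add_mul_self_le_rpow_one_add (s := y / x - 1) (by linarith [div_nonneg hy hx.le]) hp
  calc
    x ^ p + p * x ^ (p - 1) * (y - x) = x ^ p * (1 + p * (y / x - 1)) := by
      rw [Real.rpow_sub_one hx.ne']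
      field_simp
    _ ≤ x ^ p * (y / x) ^ p := by gcongr
    _ = y ^ p := by
      rw [← Real.mul_rpow hx.le (div_nonneg hy hx.le), mul_div_cancel₀ _ hx.ne']

lemma one_add_mul_exp_sub_one_le_exp_mul {m : ℝ} (hm : 1 ≤ m) (t : ℝ) :
    1 + m * (Real.exp t - 1) ≤ Real.exp (m * t) := by
  rw [mul_comm m t, Real.exp_mul]
  simpa only [add_sub_cancel] using
    one_add_mul_self_le_rpow_one_add (s := Real.exp t - 1) (by linarith [Real.exp_pos t]) hm

lemma exp_mul_log_rpow_mul_one_sub_le {b c x y : ℝ} (hc : 1 ≤ c) (hx : 1 < x) (hy : 1 ≤ y)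
    (hslope : 1 ≤ b * c * Real.log x ^ (c - 1)) :
    Real.exp (b * Real.log x ^ c) * (1 - b * c * Real.log x ^ (c - 1) * (x - y) / x) ≤
      Real.exp (b * Real.log y ^ c) := by
  have hx₀ : 0 < x := by linarith
  have hy₀ : 0 < y := by linarith
  have hlog : 0 < Real.log x := Real.log_pos hx
  set m := b * c * Real.log x ^ (c - 1)
  have hb : 0 ≤ b := by
    have : 0 < b * (c * Real.log x ^ (c - 1)) := by linarith
    exact (pos_of_mul_pos_left this (by positivity)).le
  have tangent : b * Real.log x ^ c + m * (Real.log y - Real.log x) ≤ b * Real.log y ^ c := by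
    have := mul_le_mul_of_nonneg_left
      (rpow_add_mul_rpow_sub_one_mul_sub_le_rpow hc hlog (Real.log_nonneg hy)) hb
    linarith
  have exp_log_sub : Real.exp (Real.log y - Real.log x) = y / x := by
    rw [Real.exp_sub, Real.exp_log hy₀, Real.exp_log hx₀]
  calc
    Real.exp (b * Real.log x ^ c) * (1 - m * (x - y) / x)
        = Real.exp (b * Real.log x ^ c) *
            (1 + m * (Real.exp (Real.log y - Real.log x) - 1)) := by
      rw [exp_log_sub]
      field_simp
      ring
    _ ≤ Real.exp (b * Real.log x ^ c) * Real.exp (m * (Real.log y - Real.log x)) := by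
      gcongr
      exact one_add_mul_exp_sub_one_le_exp_mul hslope _
    _ = Real.exp (b * Real.log x ^ c + m * (Real.log y - Real.log x)) := (Real.exp_add _ _).symm
    _ ≤ Real.exp (b * Real.log y ^ c) := Real.exp_le_exp.2 tangent

theorem period_ratio_subpolynomial_general {a b c x y : ℝ} (ha : 0 ≤ a) (hc : 1 ≤ c)
    (hx : 1 < x) (hy : 1 ≤ y) (hslope : 1 ≤ b * c * Real.log x ^ (c - 1)) :
    Real.exp (a * (Real.exp (b * Real.log x ^ c) - Real.exp (b * Real.log y ^ c))) ≤
      (Real.exp (a * Real.exp (b * Real.log x ^ c))) ^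
        (b * c * Real.log x ^ (c - 1) * (x - y) / x) := by
  rw [← Real.exp_mul, Real.exp_le_exp, mul_assoc]
  gcongr
  linarith [exp_mul_log_rpow_mul_one_sub_le hc hx hy hslope]

/-- Sub-polynomial ratio of consecutive periods: eventually
exp(a·(exp(b·(log n)^c) − exp(b·(log(n−1))^c))) is at most
(exp(a·exp(b·(log n)^c)))^(b·c·(log n)^(c−1)/n). -/
theorem period_ratio_subpolynomial
    (a b c : ℝ) (ha : 0 < a) (hb : 0 < b) (hc : 1 < c) :
    ∃ N : ℕ, 3 ≤ N ∧ ∀ n : ℕ, N ≤ n →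
      Real.exp (a * (Real.exp (b * Real.log n ^ c) -
          Real.exp (b * Real.log ((n : ℝ) - 1) ^ c))) ≤
        (Real.exp (a * Real.exp (b * Real.log n ^ c))) ^
          (b * c * Real.log n ^ (c - 1) / n) := by
  obtain ⟨N, hN⟩ := eventually_atTop.1 (tendsto_natCast_atTop_atTop.eventually
    (eventually_one_le_mul_log_rpow (mul_pos hb (one_pos.trans hc)) (sub_pos.2 hc)))
  refine ⟨max N 3, le_max_right N 3, fun n hn => ?_⟩
  have hn₃ : (3 : ℝ) ≤ n := by exact_mod_cast (le_max_right N 3).trans hn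
  simpa only [sub_sub_cancel, mul_one] using
    period_ratio_subpolynomial_general (x := n) (y := n - 1) ha.le hc.le (by linarith)
      (by linarith) (hN n ((le_max_left N 3).trans hn))
end

section
/- Let a > 0, b > 0, c > 1 be real numbers and let ε > 0. Then there exists a natural number N ≥ 2 such that for all natural numbers n ≥ N, exp( a·exp(b·(log(n+1))^c) ) ≤ exp( a·exp(b·(log n)^c) ) · ( exp( a·exp(b·(log n)^c) ) )^{ε}. -/
/-!
Writing `f x = exp (a * exp (g x))` with `g x = b * log x ^ c`, the claim
`f (x + 1) ≤ f x * f x ^ ε` amounts to `exp (g (x + 1)) ≤ (1 + ε) * exp (g x)`, that is, to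
`g (x + 1) - g x ≤ log (1 + ε)`. By the mean value inequality this increment tends to zero,
because the derivative `b * c * log x ^ (c - 1) / x` does.
-/

open Asymptotics Filter Topology Real

theorem tendsto_add_sub_self_of_tendsto_deriv_zero {E : Type*} [NormedAddCommGroup E]
    [NormedSpace ℝ E] {f f' : ℝ → E} (hf : ∀ᶠ x in atTop, HasDerivAt f (f' x) x)
    (hf' : Tendsto f' atTop (𝓝 0)) (h : ℝ) :
    Tendsto (fun x ↦ f (x + h) - f x) atTop (𝓝 0) := by
  have hlittle : (fun x ↦ f (x + h) - f x) =o[atTop] fun _ ↦ h := by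
    refine .of_bound fun δ hδ ↦ ?_
    have hbound : ∀ᶠ x in atTop, ‖f' x‖ ≤ δ :=
      hf'.norm.eventually_le_const (by simpa only [norm_zero] using hδ)
    obtain ⟨M, hM⟩ := eventually_atTop.1 (hf.and hbound)
    filter_upwards [eventually_ge_atTop M, eventually_ge_atTop (M - h)] with x hx hxh
    simpa only [add_sub_cancel_left] using
      (convex_Ici M).norm_image_sub_le_of_norm_hasDerivWithin_le
        (fun y hy ↦ (hM y hy).1.hasDerivWithinAt) (fun y hy ↦ (hM y hy).2)
        hx (sub_le_iff_le_add.1 hxh)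
  exact (isLittleO_one_iff ℝ).1 <|
    hlittle.trans_isBigO (isBigO_const_const h one_ne_zero atTop)

theorem hasDerivAt_log_rpow {x : ℝ} (hx : log x ≠ 0) (c : ℝ) :
    HasDerivAt (fun y ↦ log y ^ c) (c * (log x ^ (c - 1) / x)) x := by
  have hx₀ : x ≠ 0 := fun h ↦ hx (by rw [h, log_zero])
  convert (hasDerivAt_log hx₀).rpow_const (p := c) (Or.inl hx) using 1
  ring

theorem tendsto_log_rpow_div_atTop (r : ℝ) :
    Tendsto (fun x ↦ log x ^ r / x) atTop (𝓝 0) := by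
  simpa only [rpow_one] using
    (isLittleO_log_rpow_rpow_atTop r zero_lt_one).tendsto_div_nhds_zero

theorem tendsto_log_add_rpow_sub_log_rpow (c h : ℝ) :
    Tendsto (fun x ↦ log (x + h) ^ c - log x ^ c) atTop (𝓝 0) :=
  tendsto_add_sub_self_of_tendsto_deriv_zero
    ((eventually_gt_atTop 1).mono fun _ hx ↦ hasDerivAt_log_rpow (log_pos hx).ne' c)
    (by simpa using (tendsto_log_rpow_div_atTop (c - 1)).const_mul c) h

theorem exp_mul_exp_le_mul_rpow {a ε u v : ℝ} (ha : 0 ≤ a) (hε : -1 < ε)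
    (huv : v - u ≤ log (1 + ε)) :
    exp (a * exp v) ≤ exp (a * exp u) * exp (a * exp u) ^ ε := by
  have hexp : exp v ≤ exp u * (1 + ε) := by
    calc exp v ≤ exp (u + log (1 + ε)) := exp_le_exp.2 (sub_le_iff_le_add'.1 huv)
      _ = exp u * (1 + ε) := by rw [exp_add, exp_log (by linarith)]
  calc exp (a * exp v) ≤ exp (a * (exp u * (1 + ε))) := by gcongr
    _ = exp (a * exp u) * exp (a * exp u) ^ ε := by
      rw [← exp_mul, ← exp_add]
      ring_nf

theorem consecutive_period_ratio_le_pow_general {a ε : ℝ} (ha : 0 ≤ a) (hε : 0 < ε) (b c : ℝ) :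
    ∀ᶠ x : ℝ in atTop, exp (a * exp (b * log (x + 1) ^ c)) ≤
      exp (a * exp (b * log x ^ c)) * exp (a * exp (b * log x ^ c)) ^ ε := by
  have hincr : Tendsto (fun x ↦ b * log (x + 1) ^ c - b * log x ^ c) atTop (𝓝 0) := by
    simpa [mul_sub] using (tendsto_log_add_rpow_sub_log_rpow c 1).const_mul b
  filter_upwards [hincr.eventually_le_const (log_pos (by linarith : 1 < 1 + ε))] with x hx
  exact exp_mul_exp_le_mul_rpow ha (by linarith) hx

/-- Eventually the ratio of consecutive periods f_{n+1}/f_n (in the idealized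
form f_n = exp(a·exp(b·(log n)^c))) is at most f_n^ε for every ε > 0. -/
theorem consecutive_period_ratio_le_pow
    (a b c ε : ℝ) (ha : 0 < a) (hb : 0 < b) (hc : 1 < c) (hε : 0 < ε) :
    ∃ N : ℕ, 2 ≤ N ∧ ∀ n : ℕ, N ≤ n →
      Real.exp (a * Real.exp (b * Real.log ((n : ℝ) + 1) ^ c)) ≤
        Real.exp (a * Real.exp (b * Real.log n ^ c)) *
          (Real.exp (a * Real.exp (b * Real.log n ^ c))) ^ ε :=
  (eventually_atTop.1 <| tendsto_natCast_atTop_atTop.eventually <|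
    consecutive_period_ratio_le_pow_general ha.le hε b c).elim
    fun N hN ↦ ⟨max 2 N, le_max_left 2 N, fun n hn ↦ hN n (le_of_max_le_right hn)⟩
end

section
/- (Density of restart times in the generic scheme.) Let α : ℕ → ℕ with α_n ≥ 1 and β : ℕ → ℕ, and define f : ℕ → ℕ by f_1 = 1 and f_n = α_n·f_{n−1} + β_n for n ≥ 2, where β_n ≤ f_{n−1} for all n ≥ 2. Fix n ≥ 2 and let S_n = { β_n + k·f_{n−1} + j·f_n : 1 ≤ k ≤ α_n, j ∈ ℕ } be the set of restart times of the period-f_n hyper-experts. Then for every natural number τ there exists s ∈ S_n with τ ≤ s ≤ τ + f_{n−1} + β_n; in particular, consecutive restart times of period-f_n experts are at most f_{n−1} + β_n ≤ 2·f_{n−1} apart. -/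
/-!
Inside one period `f n = α n * f (n - 1) + β n` the restarts sit at `β n + k * f (n - 1)` for
`1 ≤ k ≤ α n`, the last of them exactly at the end of the period. Hence consecutive restarts are
`f (n - 1)` apart, except across a period boundary, where the gap is `f (n - 1) + β n`.
-/

theorem period_pos {α β f : ℕ → ℕ} (hα : ∀ n, 2 ≤ n → 1 ≤ α n) (hf1 : 0 < f 1)
    (hfrec : ∀ n, 2 ≤ n → f n = α n * f (n - 1) + β n) {n : ℕ} (hn : 1 ≤ n) : 0 < f n := by
  induction n, hn using Nat.le_induction with
  | base => exact hf1
  | succ m hm ih =>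
    rw [hfrec (m + 1) (by omega), Nat.add_sub_cancel]
    exact Nat.add_pos_left (Nat.mul_pos (hα (m + 1) (by omega)) ih) _

theorem exists_le_add_mul_and_mul_le_add {a b g r : ℕ} (ha : 1 ≤ a) (hg : 0 < g)
    (hr : r ≤ a * g + b) : ∃ k, 1 ≤ k ∧ k ≤ a ∧ r ≤ b + k * g ∧ k * g ≤ r + g := by
  refine ⟨min a (r / g + 1), le_min ha (Nat.succ_pos _), min_le_left _ _, ?_, ?_⟩
  · rcases min_choice a (r / g + 1) with h | h <;> rw [h]
    · rwa [add_comm]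
    · calc r ≤ r / g * g + g := (Nat.lt_div_mul_add hg).le
        _ = (r / g + 1) * g := (Nat.succ_mul _ _).symm
        _ ≤ b + (r / g + 1) * g := Nat.le_add_left _ _
  · calc min a (r / g + 1) * g ≤ (r / g + 1) * g := Nat.mul_le_mul_right g (min_le_right _ _)
      _ = r / g * g + g := Nat.succ_mul _ _
      _ ≤ r + g := Nat.add_le_add_right (Nat.div_mul_le_self r g) g

theorem restart_time_density_general {α β f : ℕ → ℕ} (hα : ∀ n, 2 ≤ n → 1 ≤ α n)
    (hf1 : 0 < f 1) (hfrec : ∀ n, 2 ≤ n → f n = α n * f (n - 1) + β n)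
    {n : ℕ} (hn : 2 ≤ n) (τ : ℕ) :
    ∃ k j : ℕ, 1 ≤ k ∧ k ≤ α n ∧
      τ ≤ β n + k * f (n - 1) + j * f n ∧
      β n + k * f (n - 1) + j * f n ≤ τ + f (n - 1) + β n := by
  have period_n_pos : 0 < f n := period_pos hα hf1 hfrec (by omega)
  have period_pred_pos : 0 < f (n - 1) := period_pos hα hf1 hfrec (by omega)
  have phase_le : τ % f n ≤ α n * f (n - 1) + β n :=
    hfrec n hn ▸ (Nat.mod_lt τ period_n_pos).le
  obtain ⟨k, one_le_k, k_le, phase_le_restart, restart_le⟩ :=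
    exists_le_add_mul_and_mul_le_add (hα n hn) period_pred_pos phase_le
  have τ_eq : τ / f n * f n + τ % f n = τ := Nat.div_add_mod' τ (f n)
  exact ⟨k, τ / f n, one_le_k, k_le, by linarith, by linarith⟩

/-- Density of restart times in the generic scheme: for each n ≥ 2, every
natural number τ is followed within f_{n−1} + β_n steps by a restart time
β_n + k·f_{n−1} + j·f_n (1 ≤ k ≤ α_n, j ∈ ℕ) of a period-f_n hyper-expert;
in particular, within 2·f_{n−1} steps. -/
theorem restart_time_density
    (α β : ℕ → ℕ) (hα : ∀ n, 1 ≤ α n)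
    (f : ℕ → ℕ) (hf1 : f 1 = 1)
    (hfrec : ∀ n, 2 ≤ n → f n = α n * f (n - 1) + β n)
    (hβ : ∀ n, 2 ≤ n → β n ≤ f (n - 1))
    (n : ℕ) (hn : 2 ≤ n) (τ : ℕ) :
    ∃ k j : ℕ, 1 ≤ k ∧ k ≤ α n ∧
      τ ≤ β n + k * f (n - 1) + j * f n ∧
      β n + k * f (n - 1) + j * f n ≤ τ + f (n - 1) + β n ∧
      β n + k * f (n - 1) + j * f n ≤ τ + 2 * f (n - 1) := by
  obtain ⟨k, j, one_le_k, k_le, le_restart, restart_le⟩ :=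
    restart_time_density_general (fun m _ => hα m) (by omega) hfrec hn τ
  exact ⟨k, j, one_le_k, k_le, le_restart, restart_le, by linarith [hβ n hn]⟩
end
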